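/- arXiv:2112.14687 — 4 statements merged into one kernel-verified Lean document; each statement's English description precedes it below -/
import Mathlib

section
/- Let K be a field, let q be an invertible element of K, let A be an associative unital K-algebra, and let x, y be units of A satisfying x·y = q²·(y·x). For α = (α₁, α₂) ∈ ℤ² define W(α) = q^{−α₁α₂}·x^{α₁}·y^{α₂}. Then for all α, β ∈ ℤ² the commutator satisfies W(α)·W(β) − W(β)·W(α) = (q^{α₁β₂ − α₂β₁} − q^{−(α₁β₂ − α₂β₁)})·W(α + β). -/
/-!
Scalars pull out of products, so conjugation by `x` sends `y` to `q ^ 2 • y`, and hence `y ^ n` to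
`q ^ (2 * n) • y ^ n`. Reordering `y ^ α₂ * x ^ β₁` inside `W α * W β` therefore costs
`q ^ (-2 * α₂ * β₁)`. The normalization of `W` contributes `q ^ (α₁ * β₂ + α₂ * β₁)`, which makes
the total exponent the antisymmetric `α × β`; the commutator is then a difference of two such
products.
-/

section Group

variable {S G : Type*} [Group S] [Group G] [MulAction S G] [IsScalarTower S G G]
  [SMulCommClass S G G] {s q : S} {x y : G}

theorem mul_zpow_eq_smul_of_mul_eq_smul (h : x * y = s • (y * x)) (n : ℤ) :
    x * y ^ n = s ^ n • (y ^ n * x) := by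
  have hconj : SemiconjBy x y (s • y) := by rw [SemiconjBy, h, smul_mul_assoc]
  rw [(hconj.zpow_right n).eq, smul_zpow, smul_mul_assoc]

theorem zpow_mul_zpow_eq_smul_of_mul_eq_smul (h : x * y = s • (y * x)) (m n : ℤ) :
    x ^ m * y ^ n = s ^ (m * n) • (y ^ n * x ^ m) := by
  have hconj : SemiconjBy (y ^ n) (s ^ n • x) x := by
    rw [SemiconjBy, mul_zpow_eq_smul_of_mul_eq_smul h, mul_smul_comm]
  rw [← (hconj.zpow_right m).eq, smul_zpow, mul_smul_comm, ← zpow_mul, mul_comm n m]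

theorem zpow_mul_zpow_mul_zpow_mul_zpow_of_mul_eq_smul (h : x * y = s • (y * x))
    (a b c d : ℤ) :
    x ^ a * y ^ b * (x ^ c * y ^ d) = s ^ (-(b * c)) • (x ^ (a + c) * y ^ (b + d)) := by
  have hswap : y ^ b * x ^ c = s ^ (-(b * c)) • (x ^ c * y ^ b) := by
    rw [zpow_mul_zpow_eq_smul_of_mul_eq_smul h, smul_smul, ← zpow_add, mul_comm c b,
      neg_add_cancel, zpow_zero, one_smul]
  calc
    x ^ a * y ^ b * (x ^ c * y ^ d) = x ^ a * (y ^ b * x ^ c) * y ^ d := by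
      simp only [mul_assoc]
    _ = s ^ (-(b * c)) • (x ^ a * (x ^ c * y ^ b) * y ^ d) := by
      rw [hswap, mul_smul_comm, smul_mul_assoc]
    _ = s ^ (-(b * c)) • (x ^ (a + c) * y ^ (b + d)) := by
      simp only [zpow_add, mul_assoc]

/-- The normalized monomial `q ^ (-γ₁ γ₂) x ^ γ₁ y ^ γ₂` of the quantum torus, with `x`, `y` in a
group `G` and `q` in a group `S` of scalars acting on `G`. -/
def quantumTorusMonomial (q : S) (x y : G) (γ : ℤ × ℤ) : G :=
  q ^ (-(γ.1 * γ.2)) • (x ^ γ.1 * y ^ γ.2)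

theorem quantumTorusMonomial_mul (h : x * y = q ^ 2 • (y * x)) (α β : ℤ × ℤ) :
    quantumTorusMonomial q x y α * quantumTorusMonomial q x y β =
      q ^ (α.1 * β.2 - α.2 * β.1) • quantumTorusMonomial q x y (α + β) := by
  have hexp : -(α.1 * α.2) + -(β.1 * β.2) + 2 * -(α.2 * β.1) =
      α.1 * β.2 - α.2 * β.1 + -((α.1 + β.1) * (α.2 + β.2)) := by ring
  have hsq (n : ℤ) : (q ^ 2) ^ n = q ^ (2 * n) := by rw [zpow_mul, zpow_ofNat]
  simp only [quantumTorusMonomial, Prod.fst_add, Prod.snd_add]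
  rw [smul_mul_smul_comm, zpow_mul_zpow_mul_zpow_mul_zpow_of_mul_eq_smul h, hsq, smul_smul,
    smul_smul, ← zpow_add, ← zpow_add, ← zpow_add, hexp]

end Group

section Units

variable {S M : Type*} [Group S] [Monoid M] [MulAction S M] [SMulCommClass S M M]
  [IsScalarTower S M M]

instance isScalarTower_units_self : IsScalarTower S Mˣ Mˣ where
  smul_assoc s u v := Units.ext (smul_mul_assoc s (u : M) (v : M))

instance smulCommClass_units_self : SMulCommClass S Mˣ Mˣ where
  smul_comm s u v := Units.ext (mul_smul_comm s (u : M) (v : M)).symm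

end Units

theorem quantum_torus_commutator_general {K A : Type*} [CommRing K] [Ring A] [Algebra K A]
    {q : Kˣ} {x y : Aˣ} (h : x * y = q ^ 2 • (y * x)) (α β : ℤ × ℤ) :
    (↑(quantumTorusMonomial q x y α) * ↑(quantumTorusMonomial q x y β) -
        ↑(quantumTorusMonomial q x y β) * ↑(quantumTorusMonomial q x y α) : A) =
      (((q ^ (α.1 * β.2 - α.2 * β.1) : Kˣ) : K) -
          ((q ^ (-(α.1 * β.2 - α.2 * β.1)) : Kˣ) : K)) •
        (↑(quantumTorusMonomial q x y (α + β)) : A) := by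
  have hmul (γ δ : ℤ × ℤ) :
      (↑(quantumTorusMonomial q x y γ) * ↑(quantumTorusMonomial q x y δ) : A) =
        ((q ^ (γ.1 * δ.2 - γ.2 * δ.1) : Kˣ) : K) • (↑(quantumTorusMonomial q x y (γ + δ)) : A) :=
    congrArg Units.val (quantumTorusMonomial_mul h γ δ)
  have hanti : β.1 * α.2 - β.2 * α.1 = -(α.1 * β.2 - α.2 * β.1) := by ring
  rw [hmul, hmul, add_comm β α, hanti, sub_smul]

/-- **Quantum torus commutator relation.**
`K` a field, `q` an invertible scalar, `A` an associative unital `K`-algebra, and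
`x, y` units of `A` with `x * y = q ^ 2 • (y * x)`.  For `α = (α₁, α₂) ∈ ℤ²` set
`W α = q ^ (-α₁ α₂) • x ^ α₁ * y ^ α₂`.  Then
`W α * W β - W β * W α = (q ^ (α × β) - q ^ (-(α × β))) • W (α + β)`,
where `α × β = α₁ β₂ - α₂ β₁` is the two-dimensional cross product. -/
theorem quantum_torus_commutator {K A : Type*} [Field K] [Ring A] [Algebra K A]
    (q : Kˣ) (x y : Aˣ)
    (hxy : (x : A) * (y : A) = ((q : K) ^ 2) • ((y : A) * (x : A)))
    (W : ℤ × ℤ → A)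
    (hW : ∀ γ : ℤ × ℤ,
      W γ = ((q ^ (-(γ.1 * γ.2)) : Kˣ) : K) • ((x ^ γ.1 * y ^ γ.2 : Aˣ) : A)) :
    ∀ α β : ℤ × ℤ,
      W α * W β - W β * W α =
        (((q ^ (α.1 * β.2 - α.2 * β.1) : Kˣ) : K)
          - ((q ^ (-(α.1 * β.2 - α.2 * β.1)) : Kˣ) : K)) • W (α + β) := by
  obtain rfl : W = fun γ ↦ (↑(quantumTorusMonomial q x y γ) : A) := funext hW
  exact quantum_torus_commutator_general (Units.ext hxy)
end

section
/- Let K be a field, let q be an invertible element of K, let A be an associative unital K-algebra, and let x, y be units of A satisfying x·y = q²·(y·x). For α = (α₁, α₂) ∈ ℤ² define W(α) = q^{−α₁α₂}·x^{α₁}·y^{α₂}. If α, β ∈ ℤ² are collinear, i.e. α₁β₂ = α₂β₁, then W(α) and W(β) commute: W(α)·W(β) = W(β)·W(α). In particular, for a fixed γ ∈ ℤ² the elements W(nγ), n ∈ ℤ, pairwise commute. -/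
/-!
The quantum torus relation says that the commutator `⁅x, y⁆` is a scalar, hence central.
On the group generated by `x` and `y` the commutator is then bilinear and alternating in the
exponents, so `⁅x ^ a * y ^ b, x ^ a' * y ^ b'⁆ = ⁅x, y⁆ ^ (a * b' - b * a')`, and the exponent is
the determinant that vanishes for collinear exponents. Scalar normalizations do not affect
commutation.
-/

open scoped commutatorElement

section Group

variable {G : Type*} [Group G] {x y z : G}

theorem commutatorElement_mul_left_of_commute (h : Commute x ⁅y, z⁆) :
    ⁅x * y, z⁆ = ⁅y, z⁆ * ⁅x, z⁆ := by
  rw [commutatorElement_mul_left_eq_conj_mul, h.eq, mul_inv_cancel_right]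

theorem commutatorElement_mul_right_of_commute (h : Commute y ⁅x, z⁆) :
    ⁅x, y * z⁆ = ⁅x, y⁆ * ⁅x, z⁆ := by
  rw [commutatorElement_mul_right_eq_mul_conj, mul_assoc _ y, h.eq, ← mul_assoc,
    mul_inv_cancel_right]

theorem commutatorElement_zpow_right_of_commute (h : Commute ⁅x, y⁆ y) (n : ℤ) :
    ⁅x, y ^ n⁆ = ⁅x, y⁆ ^ n := by
  have conj_eq : x * y * x⁻¹ = ⁅x, y⁆ * y := conj_eq_commutatorElement_mul
  rw [commutatorElement_def, ← conj_zpow, conj_eq, h.mul_zpow, mul_inv_cancel_right]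

theorem commutatorElement_zpow_left_of_commute (h : Commute ⁅x, y⁆ x) (m : ℤ) :
    ⁅x ^ m, y⁆ = ⁅x, y⁆ ^ m := by
  rw [← commutatorElement_inv y x, Commute.inv_left_iff] at h
  rw [← commutatorElement_inv, commutatorElement_zpow_right_of_commute h, ← inv_zpow,
    commutatorElement_inv]

theorem commutatorElement_zpow_zpow_of_commute (hx : Commute ⁅x, y⁆ x) (hy : Commute ⁅x, y⁆ y)
    (m n : ℤ) : ⁅x ^ m, y ^ n⁆ = ⁅x, y⁆ ^ (m * n) := by
  have hxn : Commute ⁅x, y ^ n⁆ x := by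
    rw [commutatorElement_zpow_right_of_commute hy]
    exact hx.zpow_left n
  rw [commutatorElement_zpow_left_of_commute hxn, commutatorElement_zpow_right_of_commute hy,
    ← zpow_mul, mul_comm]

theorem commutatorElement_zpow_mul_zpow_of_commute (hx : Commute ⁅x, y⁆ x)
    (hy : Commute ⁅x, y⁆ y) (a b a' b' : ℤ) :
    ⁅x ^ a * y ^ b, x ^ a' * y ^ b'⁆ = ⁅x, y⁆ ^ (a * b' - b * a') := by
  have hx_zpow (k : ℤ) : Commute (x ^ a) (⁅x, y⁆ ^ k) := (hx.zpow_zpow k a).symm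
  have hx'_zpow (k : ℤ) : Commute (x ^ a') (⁅x, y⁆ ^ k) := (hx.zpow_zpow k a').symm
  have y_with_x : ⁅y ^ b, x ^ a'⁆ = ⁅x, y⁆ ^ (-(b * a')) := by
    rw [← commutatorElement_inv, commutatorElement_zpow_zpow_of_commute hx hy, ← zpow_neg,
      mul_comm]
  have x_with_x : ⁅x ^ a, x ^ a'⁆ = 1 := (Commute.zpow_zpow_self x a a').commutator_eq
  have y_with_y : ⁅y ^ b, y ^ b'⁆ = 1 := (Commute.zpow_zpow_self y b b').commutator_eq
  have monomial_with_x : ⁅x ^ a * y ^ b, x ^ a'⁆ = ⁅x, y⁆ ^ (-(b * a')) := by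
    rw [commutatorElement_mul_left_of_commute (y_with_x ▸ hx_zpow _), y_with_x, x_with_x, mul_one]
  have monomial_with_y : ⁅x ^ a * y ^ b, y ^ b'⁆ = ⁅x, y⁆ ^ (a * b') := by
    rw [commutatorElement_mul_left_of_commute (y_with_y ▸ Commute.one_right _), y_with_y, one_mul,
      commutatorElement_zpow_zpow_of_commute hx hy]
  rw [commutatorElement_mul_right_of_commute (monomial_with_y ▸ hx'_zpow _), monomial_with_x,
    monomial_with_y, ← zpow_add, neg_add_eq_sub]

theorem commute_zpow_mul_zpow_of_collinear (hx : Commute ⁅x, y⁆ x) (hy : Commute ⁅x, y⁆ y)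
    {a b a' b' : ℤ} (h : a * b' = b * a') : Commute (x ^ a * y ^ b) (x ^ a' * y ^ b') := by
  rw [← commutatorElement_eq_one_iff_commute, commutatorElement_zpow_mul_zpow_of_commute hx hy, h,
    sub_self, zpow_zero]

end Group

section Algebra

variable {R A : Type*} [CommSemiring R] [Semiring A] [Algebra R A] {c : R} {x y : Aˣ}

theorem val_commutatorElement_eq_algebraMap (h : (x : A) * y = c • ((y : A) * x)) :
    ((⁅x, y⁆ : Aˣ) : A) = algebraMap R A c := by
  rw [commutatorElement_def, mul_assoc, ← mul_inv_rev, Units.val_mul, Units.mul_inv_eq_iff_eq_mul,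
    Units.val_mul, Units.val_mul, h, Algebra.smul_def]

theorem commute_commutatorElement_of_mul_eq_smul (h : (x : A) * y = c • ((y : A) * x)) (u : Aˣ) :
    Commute ⁅x, y⁆ u := by
  rw [← Commute.units_val_iff, val_commutatorElement_eq_algebraMap h]
  exact Algebra.commutes c (u : A)

theorem quantum_torus_collinear_commute_general (c : R) (x y : Aˣ)
    (hxy : (x : A) * y = c • ((y : A) * x)) (w : ℤ × ℤ → R) (W : ℤ × ℤ → A)
    (hW : ∀ γ : ℤ × ℤ, W γ = w γ • ((x ^ γ.1 * y ^ γ.2 : Aˣ) : A)) :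
    (∀ α β : ℤ × ℤ, α.1 * β.2 = α.2 * β.1 → W α * W β = W β * W α) ∧
    (∀ (γ : ℤ × ℤ) (m n : ℤ), W (m • γ) * W (n • γ) = W (n • γ) * W (m • γ)) := by
  have central := commute_commutatorElement_of_mul_eq_smul hxy
  have collinear (α β : ℤ × ℤ) (h : α.1 * β.2 = α.2 * β.1) : Commute (W α) (W β) := by
    rw [hW, hW]
    have monomials := commute_zpow_mul_zpow_of_collinear (central x) (central y) h
    exact (monomials.units_val.smul_left (w α)).smul_right (w β)
  refine ⟨collinear, fun γ m n ↦ collinear (m • γ) (n • γ) ?_⟩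
  simp only [Prod.smul_fst, Prod.smul_snd, smul_eq_mul]
  ring

end Algebra

/-- **Collinear quantum-torus monomials commute.**
`K` a field, `q` an invertible scalar, `A` an associative unital `K`-algebra, and
`x, y` units of `A` with `x * y = q ^ 2 • (y * x)`.  For `α = (α₁, α₂) ∈ ℤ²` set
`W α = q ^ (-α₁ α₂) • x ^ α₁ * y ^ α₂`.  If `α, β` are collinear, i.e.
`α₁ β₂ = α₂ β₁`, then `W α` and `W β` commute; in particular, for fixed `γ ∈ ℤ²`
the elements `W (n • γ)`, `n ∈ ℤ`, pairwise commute. -/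
theorem quantum_torus_collinear_commute {K A : Type*} [Field K] [Ring A] [Algebra K A]
    (q : Kˣ) (x y : Aˣ)
    (hxy : (x : A) * (y : A) = ((q : K) ^ 2) • ((y : A) * (x : A)))
    (W : ℤ × ℤ → A)
    (hW : ∀ γ : ℤ × ℤ,
      W γ = ((q ^ (-(γ.1 * γ.2)) : Kˣ) : K) • ((x ^ γ.1 * y ^ γ.2 : Aˣ) : A)) :
    (∀ α β : ℤ × ℤ, α.1 * β.2 = α.2 * β.1 → W α * W β = W β * W α) ∧
    (∀ (γ : ℤ × ℤ) (m n : ℤ), W (m • γ) * W (n • γ) = W (n • γ) * W (m • γ)) :=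
  quantum_torus_collinear_commute_general ((q : K) ^ 2) x y hxy _ W hW
end

section
/- Let K be a field and q ∈ K an invertible element. Let V be the K-vector space with basis consisting of symbols w_α for α ∈ ℤ² together with two further basis vectors c₁, c₂. Define a K-bilinear bracket on V by [w_α, w_β] = (q^{α₁β₂ − α₂β₁} − q^{−(α₁β₂ − α₂β₁)})·w_{α+β} when α + β ≠ (0,0), [w_α, w_{−α}] = α₁·c₁ + α₂·c₂, and [c_i, v] = [v, c_i] = 0 for all v ∈ V, i = 1, 2. Then this bracket is alternating and satisfies the Jacobi identity, so V is a Lie algebra over K (the trigonometric / quantum-torus Lie algebra with two central charges). -/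
/-!
The Jacobi identity is trilinear and invariant under rotation, so it only has to be checked on
basis vectors, where the central ones contribute nothing. Write `s n = q ^ n - q ^ (-n)`. The double
bracket of `w_α`, `w_β`, `w_γ` is a multiple of `w_{α+β+γ}` plus, when `α + β + γ = 0`, a central
term. The multiples sum to zero because of a product identity for `s`, the analogue of one for
sines. When `α + β + γ = 0` the three pairings `ω α β`, `ω β γ`, `ω γ α` of an alternating form
coincide, so the central terms add up to `s (ω α β)` times the charge of `α + β + γ = 0`, which
vanishes.
-/

open Finsupp LinearMap Module

section Basis

variable {I R M N : Type*} [CommRing R] [AddCommGroup M] [Module R M] [AddCommGroup N] [Module R N]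

theorem isAlt_of_basis (b : Basis I R M) {B : M →ₗ[R] M →ₗ[R] N} (self : ∀ i, B (b i) (b i) = 0)
    (swap : ∀ i j, B (b j) (b i) = -B (b i) (b j)) : B.IsAlt := by
  have flip_eq : B.flip = -B := ext_basis b b swap
  intro x
  induction b.mem_span x using Submodule.span_induction with
  | mem x hx => obtain ⟨i, rfl⟩ := hx; exact self i
  | zero => simp
  | add x y _ _ hx hy =>
    have hyx : B y x = -B x y := LinearMap.congr_fun₂ flip_eq x y
    simp [hx, hy, hyx]
  | smul a x _ hx => simp [hx]

/-- The cyclic sum whose vanishing is the Jacobi identity for the bracket `B`. -/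
def jacobiator (B : M →ₗ[R] M →ₗ[R] M) (u v w : M) : M :=
  B u (B v w) + B v (B w u) + B w (B u v)

theorem jacobiator_rotate (B : M →ₗ[R] M →ₗ[R] M) (u v w : M) :
    jacobiator B v w u = jacobiator B u v w := by
  simp only [jacobiator]
  abel

theorem jacobiator_eq_zero_of_basis (b : Basis I R M) {B : M →ₗ[R] M →ₗ[R] M}
    (h : ∀ i j k, jacobiator B (b i) (b j) (b k) = 0) (u v w : M) : jacobiator B u v w = 0 := by
  have extend_first {v w : M} (hvw : ∀ i, jacobiator B (b i) v w = 0) (u : M) :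
      jacobiator B u v w = 0 :=
    LinearMap.congr_fun
      (b.ext hvw : B.flip (B v w) + B v ∘ₗ B w + B w ∘ₗ B.flip v = 0) u
  refine extend_first (fun i => ?_) u
  rw [← jacobiator_rotate]
  refine extend_first (fun j => ?_) v
  rw [← jacobiator_rotate]
  exact extend_first (fun k => by rw [← jacobiator_rotate]; exact h i j k) w

end Basis

namespace QuantumTorus

section Sine

variable {R : Type*} [CommRing R] (q : Rˣ)

/-- The structure constant `q ^ n - q ^ (-n)`; for `q = exp (i * θ)` it is `2 * i * sin (n * θ)`. -/
def sine (n : ℤ) : R := ((q ^ n : Rˣ) : R) - ((q ^ (-n) : Rˣ) : R)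

theorem sine_zero : sine q 0 = 0 := by simp [sine]

theorem sine_neg (n : ℤ) : sine q (-n) = -sine q n := by simp [sine]

theorem sine_mul_sine_sub_cyclic (a b c : ℤ) :
    sine q b * sine q (a - c) + sine q c * sine q (b - a) + sine q a * sine q (c - b) = 0 := by
  simp only [sine, neg_sub, zpow_sub, zpow_neg, Units.val_mul]
  ring

end Sine

variable {A ι R : Type*} [AddCommGroup A] [CommRing R]

theorem sine_smul_charge_cyclic {C : Type*} [AddCommGroup C] [Module R C] (q : Rˣ)
    {ω : A →ₗ[ℤ] A →ₗ[ℤ] ℤ} (hω : ω.IsAlt) (κ : A →+ C) {α β γ : A} (h : α + β + γ = 0) :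
    sine q (ω β γ) • κ α + sine q (ω γ α) • κ β + sine q (ω α β) • κ γ = 0 := by
  have hβγ : ω β γ = ω α β := (hω.eq_of_add_add_eq_zero h).symm
  have hγα : ω γ α = ω α β := by
    rw [← hβγ]
    exact (hω.eq_of_add_add_eq_zero (by rw [← h]; abel)).symm
  rw [hβγ, hγα, ← smul_add, ← smul_add, ← map_add, ← map_add, h, map_zero, smul_zero]

section Bracket

variable [DecidableEq A] (q : Rˣ) (ω : A →ₗ[ℤ] A →ₗ[ℤ] ℤ) (κ : A →+ ι →₀ R)

/-- The bracket of two basis vectors of the quantum torus Lie algebra graded by `A`, where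
`single (Sum.inl α) 1` stands for `w_α` and `single (Sum.inr i) 1` for the central vector `c_i`. The
form `ω` plays the role of the cross product, and `κ α = ∑ i, κ α i • c_i` is the value
of `[w_α, w_{-α}]`. -/
noncomputable def basisBracket : A ⊕ ι → A ⊕ ι → (A ⊕ ι →₀ R)
  | .inl α, .inl β =>
    sine q (ω α β) • single (.inl (α + β)) 1 + if α + β = 0 then mapDomain .inr (κ α) else 0
  | _, _ => 0

/-- The bracket of the quantum torus Lie algebra, extending `basisBracket` bilinearly. -/
noncomputable def bracket : (A ⊕ ι →₀ R) →ₗ[R] (A ⊕ ι →₀ R) →ₗ[R] (A ⊕ ι →₀ R) :=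
  linearCombination R fun i => linearCombination R (basisBracket q ω κ i)

theorem bracket_single_single (i j : A ⊕ ι) :
    bracket q ω κ (single i 1) (single j 1) = basisBracket q ω κ i j := by
  simp [bracket]

theorem bracket_mapDomain_inr_left (c : ι →₀ R) (v : A ⊕ ι →₀ R) :
    bracket q ω κ (mapDomain .inr c) v = 0 := by
  have h : bracket q ω κ ∘ₗ lmapDomain R R .inr = 0 := by
    ext i j : 4
    simp [bracket_single_single, basisBracket]
  exact LinearMap.congr_fun₂ h c v

theorem bracket_mapDomain_inr_right (v : A ⊕ ι →₀ R) (c : ι →₀ R) :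
    bracket q ω κ v (mapDomain .inr c) = 0 := by
  have h : (bracket q ω κ).flip ∘ₗ lmapDomain R R .inr = 0 := by
    ext i j : 4
    cases j <;> simp [bracket_single_single, basisBracket]
  exact LinearMap.congr_fun₂ h c v

theorem bracket_single_inr_left (i : ι) (v : A ⊕ ι →₀ R) :
    bracket q ω κ (single (.inr i) 1) v = 0 := by
  simpa using bracket_mapDomain_inr_left q ω κ (single i 1) v

theorem bracket_single_inr_right (v : A ⊕ ι →₀ R) (i : ι) :
    bracket q ω κ v (single (.inr i) 1) = 0 := by
  simpa using bracket_mapDomain_inr_right q ω κ v (single i 1)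

theorem bracket_single_inl_of_add_ne_zero {α β : A} (h : α + β ≠ 0) :
    bracket q ω κ (single (.inl α) 1) (single (.inl β) 1) =
      sine q (ω α β) • single (.inl (α + β)) 1 := by
  rw [bracket_single_single, basisBracket, if_neg h, add_zero]

variable {ω}

theorem bracket_single_inl_neg (hω : ω.IsAlt) (α : A) :
    bracket q ω κ (single (.inl α) 1) (single (.inl (-α)) 1) = mapDomain .inr (κ α) := by
  rw [bracket_single_single, basisBracket, if_pos (add_neg_cancel α), map_neg, hω.self_eq_zero,
    neg_zero, sine_zero, zero_smul, zero_add]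

theorem basisBracket_self (hω : ω.IsAlt) (hκ : ∀ α, α + α = 0 → κ α = 0) (i : A ⊕ ι) :
    basisBracket q ω κ i i = 0 := by
  rcases i with α | i
  · simp +contextual [basisBracket, hω.self_eq_zero, sine_zero, hκ]
  · rfl

theorem basisBracket_swap (hω : ω.IsAlt) (i j : A ⊕ ι) :
    basisBracket q ω κ j i = -basisBracket q ω κ i j := by
  rcases i with α | i <;> rcases j with β | j <;> simp only [basisBracket, neg_zero]
  rw [← hω.neg α β, sine_neg, add_comm β α]
  split_ifs with h
  · have charges : mapDomain (.inr : ι → A ⊕ ι) (κ α) + mapDomain .inr (κ β) = 0 := by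
      rw [← mapDomain_add, ← map_add, h, map_zero, mapDomain_zero]
    linear_combination (norm := module) charges
  · module

theorem bracket_isAlt (hω : ω.IsAlt) (hκ : ∀ α, α + α = 0 → κ α = 0) :
    (bracket q ω κ).IsAlt :=
  isAlt_of_basis Finsupp.basisSingleOne
    (fun i => by simpa [bracket_single_single] using basisBracket_self q κ hω hκ i)
    (fun i j => by simpa [bracket_single_single] using basisBracket_swap q κ hω i j)

theorem bracket_bracket_single_inl (hω : ω.IsAlt) (α β γ : A) :
    bracket q ω κ (single (.inl α) 1)
        (bracket q ω κ (single (.inl β) 1) (single (.inl γ) 1)) =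
      (sine q (ω β γ) * sine q (ω α β - ω γ α)) • single (.inl (α + β + γ)) 1 +
        sine q (ω β γ) • if α + β + γ = 0 then mapDomain .inr (κ α) else 0 := by
  have charge_central : bracket q ω κ (single (.inl α) 1)
      (if β + γ = 0 then mapDomain .inr (κ β) else 0) = 0 := by
    split_ifs <;> simp [bracket_mapDomain_inr_right]
  have pairing : ω α (β + γ) = ω α β - ω γ α := by rw [map_add, ← hω.neg α γ, sub_neg_eq_add]
  rw [bracket_single_single, basisBracket, map_add, map_smul, charge_central, add_zero,
    bracket_single_single, basisBracket, pairing, ← add_assoc, smul_add, smul_smul]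

theorem jacobiator_bracket_single_inl (hω : ω.IsAlt) (α β γ : A) :
    jacobiator (bracket q ω κ) (single (.inl α) 1) (single (.inl β) 1) (single (.inl γ) 1) = 0 := by
  have weights := congrArg (· • single (.inl (α + β + γ) : A ⊕ ι) (1 : R))
    (sine_mul_sine_sub_cyclic q (ω α β) (ω β γ) (ω γ α))
  simp only [add_smul, zero_smul] at weights
  rw [jacobiator, bracket_bracket_single_inl q κ hω, bracket_bracket_single_inl q κ hω,
    bracket_bracket_single_inl q κ hω, show β + γ + α = α + β + γ by abel,
    show γ + α + β = α + β + γ by abel]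
  split_ifs with h
  · have charges := congrArg (mapDomain (.inr : ι → A ⊕ ι)) (sine_smul_charge_cyclic q hω κ h)
    simp only [mapDomain_add, mapDomain_smul, mapDomain_zero] at charges
    linear_combination (norm := module) weights + charges
  · simpa using weights

theorem jacobiator_bracket (hω : ω.IsAlt) (u v w : A ⊕ ι →₀ R) :
    jacobiator (bracket q ω κ) u v w = 0 := by
  refine jacobiator_eq_zero_of_basis Finsupp.basisSingleOne (fun i j k => ?_) u v w
  simp only [coe_basisSingleOne]
  match i, j, k with
  | .inl α, .inl β, .inl γ => exact jacobiator_bracket_single_inl q κ hω α β γ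
  | .inr _, _, _ | .inl _, .inr _, _ | .inl _, .inl _, .inr _ =>
    simp [jacobiator, bracket_single_inr_left, bracket_single_inr_right]

end Bracket

/-- The cross product `α₁β₂ - α₂β₁` as a bilinear form on `ℤ²`. -/
def cross : ℤ × ℤ →ₗ[ℤ] ℤ × ℤ →ₗ[ℤ] ℤ :=
  (LinearMap.mul ℤ ℤ).compl₁₂ (.fst ℤ ℤ ℤ) (.snd ℤ ℤ ℤ) -
    (LinearMap.mul ℤ ℤ).compl₁₂ (.snd ℤ ℤ ℤ) (.fst ℤ ℤ ℤ)

theorem cross_apply (α β : ℤ × ℤ) : cross α β = α.1 * β.2 - α.2 * β.1 := rfl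

theorem cross_isAlt : cross.IsAlt := fun α => by rw [cross_apply, mul_comm, sub_self]

/-- The charge `α₁c₁ + α₂c₂`, with `c₁`, `c₂` indexed by `0`, `1`. -/
noncomputable def charge (R : Type*) [CommRing R] : ℤ × ℤ →+ Fin 2 →₀ R :=
  ((singleAddHom 0).comp (Int.castAddHom R)).coprod ((singleAddHom 1).comp (Int.castAddHom R))

theorem charge_eq_zero_of_add_self_eq_zero {R : Type*} [CommRing R] {α : ℤ × ℤ} (h : α + α = 0) :
    charge R α = 0 := by
  rw [self_eq_neg.mp (eq_neg_of_add_eq_zero_left h), map_zero]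

theorem mapDomain_inr_charge {R : Type*} [CommRing R] (α : ℤ × ℤ) :
    mapDomain .inr (charge R α) =
      (α.1 : R) • single (.inr 0 : (ℤ × ℤ) ⊕ Fin 2) (1 : R) + (α.2 : R) • single (.inr 1) 1 := by
  simp [charge, mapDomain_add]

end QuantumTorus

open QuantumTorus in
theorem quantum_torus_lie_algebra_general {A ι R : Type*} [AddCommGroup A] [CommRing R] (q : Rˣ)
    {ω : A →ₗ[ℤ] A →ₗ[ℤ] ℤ} (hω : ω.IsAlt) {κ : A →+ ι →₀ R} (hκ : ∀ α, α + α = 0 → κ α = 0) :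
    ∃ B : (A ⊕ ι →₀ R) →ₗ[R] (A ⊕ ι →₀ R) →ₗ[R] (A ⊕ ι →₀ R),
      (∀ α β : A, α + β ≠ 0 →
          B (single (.inl α) 1) (single (.inl β) 1) =
            (((q ^ ω α β : Rˣ) : R) - ((q ^ (-ω α β) : Rˣ) : R)) • single (.inl (α + β)) 1) ∧
      (∀ α : A, B (single (.inl α) 1) (single (.inl (-α)) 1) = mapDomain .inr (κ α)) ∧
      (∀ (i : ι) (v : A ⊕ ι →₀ R), B (single (.inr i) 1) v = 0 ∧ B v (single (.inr i) 1) = 0) ∧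
      (∀ v, B v v = 0) ∧
      (∀ u v w, B u (B v w) + B v (B w u) + B w (B u v) = 0) := by
  classical
  exact ⟨bracket q ω κ, fun _ _ => bracket_single_inl_of_add_ne_zero q ω κ,
    bracket_single_inl_neg q κ hω,
    fun i v => ⟨bracket_single_inr_left q ω κ i v, bracket_single_inr_right q ω κ v i⟩,
    bracket_isAlt q κ hω hκ, jacobiator_bracket q κ hω⟩

/-- **The quantum-torus (sine) Lie algebra with two central charges.**
Let `K` be a field and `q ∈ Kˣ`.  Let `V` be the `K`-vector space with basis
`w_α` (`α ∈ ℤ²`) together with `c₁, c₂`, realized as the free `K`-module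
`V = ((ℤ × ℤ) ⊕ Fin 2) →₀ K` with `w α = single (inl α) 1` and
`c i = single (inr i) 1`.  There is a `K`-bilinear bracket `B` on `V` with
`B (w α) (w β) = (q^(α×β) - q^(-(α×β))) • w (α+β)` for `α + β ≠ 0`,
`B (w α) (w (-α)) = α₁ • c₁ + α₂ • c₂`, and `c₁, c₂` central; and any such
bracket is alternating and satisfies the Jacobi identity, making `V` a Lie
algebra over `K`. -/
theorem quantum_torus_lie_algebra {K : Type*} [Field K] (q : Kˣ) :
    ∃ B : (((ℤ × ℤ) ⊕ Fin 2) →₀ K) →ₗ[K]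
          (((ℤ × ℤ) ⊕ Fin 2) →₀ K) →ₗ[K] (((ℤ × ℤ) ⊕ Fin 2) →₀ K),
      (∀ α β : ℤ × ℤ, α + β ≠ 0 →
          B (Finsupp.single (Sum.inl α) 1) (Finsupp.single (Sum.inl β) 1) =
            (((q ^ (α.1 * β.2 - α.2 * β.1) : Kˣ) : K)
              - ((q ^ (-(α.1 * β.2 - α.2 * β.1)) : Kˣ) : K)) •
              Finsupp.single (Sum.inl (α + β)) (1 : K)) ∧
      (∀ α : ℤ × ℤ,
          B (Finsupp.single (Sum.inl α) 1) (Finsupp.single (Sum.inl (-α)) 1) =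
            (α.1 : K) • Finsupp.single (Sum.inr (0 : Fin 2)) (1 : K)
              + (α.2 : K) • Finsupp.single (Sum.inr (1 : Fin 2)) (1 : K)) ∧
      (∀ (i : Fin 2) (v : ((ℤ × ℤ) ⊕ Fin 2) →₀ K),
          B (Finsupp.single (Sum.inr i) 1) v = 0 ∧
          B v (Finsupp.single (Sum.inr i) 1) = 0) ∧
      (∀ v, B v v = 0) ∧
      (∀ u v w, B u (B v w) + B v (B w u) + B w (B u v) = 0) := by
  simpa only [QuantumTorus.cross_apply, QuantumTorus.mapDomain_inr_charge] using
    quantum_torus_lie_algebra_general q QuantumTorus.cross_isAlt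
      fun _ => QuantumTorus.charge_eq_zero_of_add_self_eq_zero (R := K)
end

section
/- Let K be a field, let m, n be natural numbers, and let q ∈ K be such that the q-Pochhammer symbols (q;q)_j := ∏_{i=1}^{j} (1 − q^i) are nonzero for all j ≤ max(m, n). Then q^{mn} / ((q;q)_m · (q;q)_n) = ∑_{k=0}^{min(m,n)} (−1)^k · q^{k(k−1)/2} / ((q;q)_{m−k} · (q;q)_k · (q;q)_{n−k}). -/
/-!
Cauchy's `q`-analogue of Newton interpolation expands `x ^ m` in the products
`∏_{i < k} (x - q ^ i)`, with the Gaussian binomials `[m, k]` as coefficients. At `x = q ^ n` such a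
product is `(-1)^k q^(k choose 2) (q;q)_k [n, k]`, so that in every commutative ring
`q^(m n) = ∑_k (-1)^k q^(k choose 2) (q;q)_k [m, k] [n, k]`. Dividing by `(q;q)_m (q;q)_n` and
writing the Gaussian binomials as quotients of Pochhammer symbols gives the pentagon identity.
-/

open Finset

/-- The finite `q`-Pochhammer symbol `(q;q)_n`; the first parameter of the general symbol `(a;q)_n`
is fixed to be `q`. -/
def qPochhammer {R : Type*} [CommRing R] (q : R) (n : ℕ) : R :=
  ∏ i ∈ range n, (1 - q ^ (i + 1))

/-- The Gaussian binomial coefficient `[n, k]` at `q`. It is defined by the `q`-Pascal recursion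
rather than as a quotient of Pochhammer symbols, so that it makes sense in every semiring, in
particular when `q` is a root of unity. -/
def gaussBinom {R : Type*} [Semiring R] (q : R) : ℕ → ℕ → R
  | _, 0 => 1
  | 0, _ + 1 => 0
  | n + 1, k + 1 => gaussBinom q n k + q ^ (k + 1) * gaussBinom q n (k + 1)

section Semiring

variable {R : Type*} [Semiring R] (q : R)

@[simp]
theorem gaussBinom_zero_right (n : ℕ) : gaussBinom q n 0 = 1 := by
  cases n <;> rfl

theorem gaussBinom_succ_succ (n k : ℕ) :
    gaussBinom q (n + 1) (k + 1) = gaussBinom q n k + q ^ (k + 1) * gaussBinom q n (k + 1) :=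
  rfl

theorem gaussBinom_eq_zero_of_lt {n k : ℕ} (h : n < k) : gaussBinom q n k = 0 := by
  induction n, k using gaussBinom.induct with
  | case1 n => exact absurd h n.not_lt_zero
  | case2 k => rfl
  | case3 n k ih₁ ih₂ =>
    rw [gaussBinom_succ_succ, ih₁ (by lia), ih₂ (by lia), mul_zero, add_zero]

end Semiring

section CommRing

variable {R : Type*} [CommRing R] (q : R)

@[simp]
theorem qPochhammer_zero : qPochhammer q 0 = 1 :=
  prod_range_zero _

theorem qPochhammer_succ (n : ℕ) :
    qPochhammer q (n + 1) = qPochhammer q n * (1 - q ^ (n + 1)) :=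
  prod_range_succ _ n

theorem one_sub_pow_mul_gaussBinom (k d : ℕ) :
    (1 - q ^ d) * gaussBinom q (k + d) k = (1 - q ^ (k + 1)) * gaussBinom q (k + d) (k + 1) := by
  induction d generalizing k with
  | zero => simp [gaussBinom_eq_zero_of_lt]
  | succ d ih_d =>
    induction k with
    | zero =>
      have h := ih_d 0
      simp only [zero_add, gaussBinom_zero_right, gaussBinom_succ_succ] at h ⊢
      linear_combination q * h
    | succ k ih_k =>
      have h := ih_d (k + 1)
      rw [show k + 1 + d = k + (d + 1) by ring] at h
      rw [show k + 1 + (d + 1) = k + (d + 1) + 1 by ring, gaussBinom_succ_succ,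
        gaussBinom_succ_succ]
      linear_combination ih_k + q ^ (k + 2) * h

theorem gaussBinom_mul_qPochhammer_mul_qPochhammer (k d : ℕ) :
    gaussBinom q (k + d) k * (qPochhammer q k * qPochhammer q d) = qPochhammer q (k + d) := by
  induction k generalizing d with
  | zero => simp
  | succ k ih =>
    have h := ih (d + 1)
    have absorb := one_sub_pow_mul_gaussBinom q k (d + 1)
    rw [show k + 1 + d = k + (d + 1) by ring, qPochhammer_succ]
    rw [qPochhammer_succ] at h
    linear_combination h - qPochhammer q k * qPochhammer q d * absorb

-- The factor `q ^ k` avoids `q ^ (n - k)`, whose exponent would be truncated for `n < k`.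
theorem pow_sub_pow_mul_gaussBinom (n k : ℕ) :
    (q ^ k - q ^ n) * gaussBinom q n k =
      q ^ k * (1 - q ^ (k + 1)) * gaussBinom q n (k + 1) := by
  rcases le_or_gt k n with hkn | hnk
  · obtain ⟨d, rfl⟩ := Nat.exists_eq_add_of_le hkn
    linear_combination q ^ k * one_sub_pow_mul_gaussBinom q k d
  · rw [gaussBinom_eq_zero_of_lt q hnk, gaussBinom_eq_zero_of_lt q (hnk.trans k.lt_succ_self),
      mul_zero, mul_zero]

theorem prod_pow_sub_pow_eq_mul_gaussBinom (n k : ℕ) :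
    ∏ i ∈ range k, (q ^ n - q ^ i) =
      (-1) ^ k * q ^ k.choose 2 * qPochhammer q k * gaussBinom q n k := by
  induction k with
  | zero => simp
  | succ k ih =>
    have hchoose : (k + 1).choose 2 = k + k.choose 2 := by
      rw [Nat.choose_succ_succ', Nat.choose_one_right]
    rw [prod_range_succ, ih, qPochhammer_succ, hchoose]
    linear_combination
      -(-1) ^ k * q ^ k.choose 2 * qPochhammer q k * pow_sub_pow_mul_gaussBinom q n k

theorem pow_eq_sum_gaussBinom_mul_prod (x : R) (m : ℕ) :
    x ^ m = ∑ k ∈ range (m + 1), gaussBinom q m k * ∏ i ∈ range k, (x - q ^ i) := by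
  induction m with
  | zero => simp
  | succ m ih =>
    set P : ℕ → R := fun k ↦ ∏ i ∈ range k, (x - q ^ i) with hP
    have hP_succ (k : ℕ) : P k * x = P (k + 1) + q ^ k * P k := by
      simp only [hP, prod_range_succ]
      ring
    have hshift : ∑ k ∈ range (m + 1), q ^ k * gaussBinom q m k * P k =
        ∑ k ∈ range (m + 1), q ^ (k + 1) * gaussBinom q m (k + 1) * P (k + 1) + P 0 := by
      have h := sum_range_succ' (fun k ↦ q ^ k * gaussBinom q m k * P k) (m + 1)
      rw [sum_range_succ, gaussBinom_eq_zero_of_lt q m.lt_succ_self] at h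
      simpa only [mul_zero, zero_mul, add_zero, pow_zero, gaussBinom_zero_right, one_mul] using h
    calc x ^ (m + 1)
      _ = ∑ k ∈ range (m + 1), gaussBinom q m k * (P k * x) := by
        simp only [pow_succ, ih, sum_mul, mul_assoc, hP]
      _ = ∑ k ∈ range (m + 1), gaussBinom q m k * P (k + 1) +
            ∑ k ∈ range (m + 1), q ^ k * gaussBinom q m k * P k := by
        rw [← sum_add_distrib]
        refine sum_congr rfl fun k _ ↦ ?_
        rw [hP_succ]
        ring
      _ = ∑ k ∈ range (m + 1), gaussBinom q (m + 1) (k + 1) * P (k + 1) + P 0 := by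
        rw [hshift, ← add_assoc, ← sum_add_distrib]
        simp only [gaussBinom_succ_succ, add_mul]
      _ = ∑ k ∈ range (m + 1 + 1), gaussBinom q (m + 1) k * P k := by
        rw [sum_range_succ' _ (m + 1), gaussBinom_zero_right, one_mul]

theorem pow_mul_eq_sum_gaussBinom_mul_gaussBinom (m n : ℕ) :
    q ^ (m * n) = ∑ k ∈ range (min m n + 1),
      (-1) ^ k * q ^ k.choose 2 * qPochhammer q k * gaussBinom q m k * gaussBinom q n k := by
  have hsubset : range (min m n + 1) ⊆ range (m + 1) := range_subset_range.mpr (by lia)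
  rw [mul_comm, pow_mul, pow_eq_sum_gaussBinom_mul_prod q (q ^ n) m]
  symm
  refine sum_subset_zero_on_sdiff hsubset (fun k hk ↦ ?_) fun k _ ↦ ?_
  · have hnk : n < k := by
      simp only [mem_sdiff, mem_range] at hk
      lia
    rw [prod_pow_sub_pow_eq_mul_gaussBinom, gaussBinom_eq_zero_of_lt q hnk, mul_zero, mul_zero]
  · rw [prod_pow_sub_pow_eq_mul_gaussBinom]
    ring

end CommRing

theorem gaussBinom_div_qPochhammer {K : Type*} [Field K] {q : K} {n k : ℕ} (hk : k ≤ n)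
    (hn : qPochhammer q n ≠ 0) :
    gaussBinom q n k / qPochhammer q n = 1 / (qPochhammer q k * qPochhammer q (n - k)) := by
  obtain ⟨d, rfl⟩ := Nat.exists_eq_add_of_le hk
  rw [Nat.add_sub_cancel_left]
  have hprod := gaussBinom_mul_qPochhammer_mul_qPochhammer q k d
  have hkd : qPochhammer q k * qPochhammer q d ≠ 0 := right_ne_zero_of_mul (hprod ▸ hn)
  rw [div_eq_div_iff hn hkd, hprod, one_mul]

/-- **Coefficient form of the Faddeev–Kashaev–Volkov pentagon identity.**
Let `K` be a field, `m n : ℕ`, and `q ∈ K` such that the finite q-Pochhammer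
symbols `(q;q)_j = ∏_{i=1}^j (1 - q^i)` are nonzero for all `j ≤ max m n`.  Then
`q^(m n) / ((q;q)_m (q;q)_n)
  = ∑_{k=0}^{min m n} (-1)^k q^(k(k-1)/2) / ((q;q)_{m-k} (q;q)_k (q;q)_{n-k})`. -/
theorem pentagon_coefficient_identity {K : Type*} [Field K] (q : K) (m n : ℕ)
    (hq : ∀ j ≤ max m n, (∏ i ∈ Finset.range j, (1 - q ^ (i + 1))) ≠ 0) :
    q ^ (m * n) /
        ((∏ i ∈ Finset.range m, (1 - q ^ (i + 1))) *
          (∏ i ∈ Finset.range n, (1 - q ^ (i + 1)))) =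
      ∑ k ∈ Finset.range (min m n + 1),
        (-1 : K) ^ k * q ^ (k * (k - 1) / 2) /
          ((∏ i ∈ Finset.range (m - k), (1 - q ^ (i + 1))) *
            (∏ i ∈ Finset.range k, (1 - q ^ (i + 1))) *
            (∏ i ∈ Finset.range (n - k), (1 - q ^ (i + 1)))) := by
  have hfold (j : ℕ) : ∏ i ∈ range j, (1 - q ^ (i + 1)) = qPochhammer q j := rfl
  simp only [hfold, ← Nat.choose_two_right] at hq ⊢
  rw [pow_mul_eq_sum_gaussBinom_mul_gaussBinom, sum_div]
  refine sum_congr rfl fun k hk ↦ ?_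
  have hkmn : k ≤ min m n := Nat.lt_succ_iff.mp (mem_range.mp hk)
  have hk0 : qPochhammer q k ≠ 0 := hq k (hkmn.trans min_le_max)
  have hm := gaussBinom_div_qPochhammer (hkmn.trans (min_le_left m n)) (hq m (le_max_left m n))
  have hn := gaussBinom_div_qPochhammer (hkmn.trans (min_le_right m n)) (hq n (le_max_right m n))
  calc (-1) ^ k * q ^ k.choose 2 * qPochhammer q k * gaussBinom q m k * gaussBinom q n k /
        (qPochhammer q m * qPochhammer q n)
    _ = (-1) ^ k * q ^ k.choose 2 * qPochhammer q k *
          (gaussBinom q m k / qPochhammer q m) * (gaussBinom q n k / qPochhammer q n) := by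
      ring
    _ = (-1) ^ k * q ^ k.choose 2 /
          (qPochhammer q (m - k) * qPochhammer q k * qPochhammer q (n - k)) := by
      rw [hm, hn]
      field_simp
end
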